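/- arXiv:2507.18766 — 4 statements merged into one kernel-verified Lean document; each statement's English description precedes it below -/
import Mathlib

section
/- Let ρ : ℝ × (−T,T) → ℝ be jointly C¹, with ρ(·,t) a positive probability density for each t, and suppose |∂_t ρ(x,t)| and |x ∂_t ρ(x,t)| are dominated by integrable functions of x uniformly in t. Write h(x) = ∂_t ρ(x,t)|_{t=0}. Then for each fixed f ∈ (0,1), the Lorenz curve satisfies d/dt|_{t=0} ℒ_t(f) = ∫_{−∞}^{G_0(f)} y h(y) dy − G_0(f) ∫_{−∞}^{G_0(f)} h(y) dy. -/
open MeasureTheory Set Filter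

/-- A positive probability density on ℝ: continuous, everywhere positive,
integrating to 1, with finite first moment. -/
def IsPosDensity (ρ : ℝ → ℝ) : Prop :=
  Continuous ρ ∧ (∀ x, 0 < ρ x) ∧ (∫ x, ρ x) = 1 ∧
    MeasureTheory.Integrable (fun x => |x| * ρ x)

/-- The cumulative distribution function of a density. -/
noncomputable def cdfOf (ρ : ℝ → ℝ) (x : ℝ) : ℝ := ∫ y in Iic x, ρ y

theorem aux_diff (T : ℝ) (hT : 0 < T) (ρ : ℝ → ℝ → ℝ)
    (hC1 : ContDiff ℝ 1 (fun p : ℝ × ℝ => ρ p.1 p.2))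
    (w b : ℝ → ℝ) (hw : Continuous w) (hb : Integrable b)
    (hint : ∀ t ∈ Ioo (-T) T, Integrable (fun x => w x * ρ x t))
    (hdom : ∀ t ∈ Ioo (-T) T, ∀ x : ℝ, |w x * deriv (fun s => ρ x s) t| ≤ b x)
    (h : ℝ → ℝ) (hh : ∀ x, h x = deriv (fun s => ρ x s) 0) (c : ℝ) :
    IntegrableOn (fun y => w y * h y) (Iic c) ∧
    HasDerivAt (fun t => ∫ y in Iic c, w y * ρ y t) (∫ y in Iic c, w y * h y) 0 := by
  have hd : ∀ x t, HasDerivAt (fun s => ρ x s) (deriv (fun s => ρ x s) t) t := by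
    intro x t
    apply DifferentiableAt.hasDerivAt
    have : Differentiable ℝ (fun p : ℝ × ℝ => ρ p.1 p.2) := hC1.differentiable (by norm_num)
    exact (this.comp (by fun_prop : Differentiable ℝ (fun s : ℝ => ((x, s) : ℝ × ℝ)))) t
  have hcont : ∀ t, Continuous (fun x => ρ x t) := fun t =>
    hC1.continuous.comp (by fun_prop : Continuous (fun x : ℝ => ((x, t) : ℝ × ℝ)))
  have hhm : Measurable h := by
    have hc : Continuous h := by
      have e : h = fun x => fderiv ℝ (fun p : ℝ × ℝ => ρ p.1 p.2) (x, 0) (0, 1) := by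
        funext x
        rw [hh]
        have hf : HasFDerivAt (fun p : ℝ × ℝ => ρ p.1 p.2) _ (x, 0) :=
          (hC1.differentiable (by norm_num) (x, 0)).hasFDerivAt
        have h2 : HasDerivAt (fun s : ℝ => ((x, s) : ℝ × ℝ)) (0, 1) 0 :=
          (hasDerivAt_const (0 : ℝ) x).prodMk (hasDerivAt_id (0 : ℝ))
        exact (hf.comp_hasDerivAt (0 : ℝ) h2).deriv
      rw [e]
      have := hC1.continuous_fderiv (by norm_num)
      fun_prop
    exact hc.measurable
  have h0 : (0 : ℝ) ∈ Ioo (-T) T := ⟨by linarith, hT⟩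
  have H := hasDerivAt_integral_of_dominated_loc_of_deriv_le (bound := b)
    (μ := volume.restrict (Iic c)) (F := fun t y => w y * ρ y t)
    (F' := fun t y => w y * deriv (fun s => ρ y s) t) (Ioo_mem_nhds h0.1 h0.2)
    ?_ ?_ ?_ ?_ ?_ ?_
  · simp only [← hh] at H
    exact H
  · exact Eventually.of_forall fun t => (hw.mul (hcont t)).aestronglyMeasurable
  · exact (hint 0 h0).integrableOn
  · simp only [← hh]
    exact (hw.measurable.mul hhm).aestronglyMeasurable
  · exact Eventually.of_forall fun x t ht => hdom t ht x
  · exact hb.integrableOn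
  · exact Eventually.of_forall fun x t ht => (hd x t).const_mul (w x)

theorem stmt1 (T : ℝ) (hT : 0 < T) (ρ : ℝ → ℝ → ℝ)
    (hC1 : ContDiff ℝ 1 (fun p : ℝ × ℝ => ρ p.1 p.2))
    (hdens : ∀ t ∈ Ioo (-T) T, IsPosDensity (fun x => ρ x t))
    (bound₁ bound₂ : ℝ → ℝ)
    (hbound₁ : MeasureTheory.Integrable bound₁)
    (hbound₂ : MeasureTheory.Integrable bound₂)
    (hdom₁ : ∀ t ∈ Ioo (-T) T, ∀ x : ℝ, |deriv (fun s => ρ x s) t| ≤ bound₁ x)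
    (hdom₂ : ∀ t ∈ Ioo (-T) T, ∀ x : ℝ, |x * deriv (fun s => ρ x s) t| ≤ bound₂ x)
    (G : ℝ → ℝ → ℝ)
    (hG : ∀ t ∈ Ioo (-T) T, ∀ f ∈ Ioo (0:ℝ) 1, cdfOf (fun x => ρ x t) (G t f) = f)
    (h : ℝ → ℝ) (hh : ∀ x, h x = deriv (fun s => ρ x s) 0)
    (f : ℝ) (hf : f ∈ Ioo (0:ℝ) 1) :
    HasDerivAt (fun t => ∫ y in Iic (G t f), y * ρ y t)
      ((∫ y in Iic (G 0 f), y * h y) - G 0 f * ∫ y in Iic (G 0 f), h y) 0 := by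
  have h0 : (0 : ℝ) ∈ Ioo (-T) T := ⟨by linarith, hT⟩
  have hnear : ∀ᶠ t in nhds (0 : ℝ), t ∈ Ioo (-T) T := Ioo_mem_nhds h0.1 h0.2
  have hI1 : ∀ t ∈ Ioo (-T) T, Integrable (fun x => ρ x t) := by
    intro t ht
    by_contra hn
    have := (hdens t ht).2.2.1
    rw [integral_undef hn] at this
    norm_num at this
  have hI2 : ∀ t ∈ Ioo (-T) T, Integrable (fun x => x * ρ x t) := by
    intro t ht
    refine (hdens t ht).2.2.2.mono
      (continuous_id.mul (hdens t ht).1).aestronglyMeasurable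
      (Eventually.of_forall fun x => ?_)
    simp
  have D1 := aux_diff T hT ρ hC1 (fun _ => 1) bound₁ continuous_const hbound₁
    (by simpa using hI1) (by simpa using hdom₁) h hh
  simp only [one_mul] at D1
  have D2 := aux_diff T hT ρ hC1 (fun x => x) bound₂ continuous_id hbound₂ hI2 hdom₂ h hh
  have hdiff : ∀ t ∈ Ioo (-T) T, ∀ a b, (∫ y in Iic b, ρ y t) - (∫ y in Iic a, ρ y t)
      = ∫ y in a..b, ρ y t := fun t ht a b =>
    intervalIntegral.integral_Iic_sub_Iic (hI1 t ht).integrableOn (hI1 t ht).integrableOn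
  have hdiff2 : ∀ t ∈ Ioo (-T) T, ∀ a b, (∫ y in Iic b, y * ρ y t) - (∫ y in Iic a, y * ρ y t)
      = ∫ y in a..b, y * ρ y t := fun t ht a b =>
    intervalIntegral.integral_Iic_sub_Iic (hI2 t ht).integrableOn (hI2 t ht).integrableOn
  have hlt : ∀ t ∈ Ioo (-T) T, ∀ a b, a < b → (∫ y in Iic a, ρ y t) < ∫ y in Iic b, ρ y t := by
    intro t ht a b hab
    have := intervalIntegral.intervalIntegral_pos_of_pos
      ((hI1 t ht).intervalIntegrable (a := a) (b := b)) (hdens t ht).2.1 hab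
    linarith [hdiff t ht a b]
  have hmono : ∀ t ∈ Ioo (-T) T, StrictMono (fun a => ∫ y in Iic a, ρ y t) :=
    fun t ht a b hab => hlt t ht a b hab
  have hGt : ∀ t ∈ Ioo (-T) T, (∫ y in Iic (G t f), ρ y t) = f := fun t ht => hG t ht f hf
  set g := G 0 f with hg
  have hGc : Tendsto (fun t => G t f) (nhds 0) (nhds g) := by
    rw [tendsto_order]
    constructor
    · intro a ha
      have h1 := hlt 0 h0 a g ha
      rw [hg, hGt 0 h0] at h1
      filter_upwards [hnear, (D1 a).2.continuousAt.eventually_lt_const h1] with t ht h2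
      rw [← hGt t ht] at h2
      exact (hmono t ht).lt_iff_lt.1 h2
    · intro a ha
      have h1 := hlt 0 h0 g a ha
      rw [hg, hGt 0 h0] at h1
      filter_upwards [hnear, (D1 a).2.continuousAt.eventually_const_lt h1] with t ht h2
      rw [← hGt t ht] at h2
      exact (hmono t ht).lt_iff_lt.1 h2
  -- main part plus remainder
  have hM : HasDerivAt (fun t => (∫ y in Iic g, y * ρ y t) - g * (∫ y in Iic g, ρ y t) + g * f)
      ((∫ y in Iic g, y * h y) - g * ∫ y in Iic g, h y) 0 :=
    ((D2 g).2.sub ((D1 g).2.const_mul g)).add_const _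
  have hR : HasDerivAt (fun t => ∫ y in g..G t f, (y - g) * ρ y t) 0 0 := by
    rw [hasDerivAt_iff_isLittleO]
    have hO := (D1 g).2.isBigO_sub
    have ho : (fun t => G t f - g) =o[nhds 0] (fun _ => (1 : ℝ)) := by
      rw [Asymptotics.isLittleO_one_iff]
      simpa using hGc.sub_const g
    have := ho.mul_isBigO hO
    simp only [one_mul] at this
    refine Asymptotics.IsBigO.trans_isLittleO (Asymptotics.IsBigO.of_bound 1 ?_) this
    filter_upwards [hnear] with t ht
    have e0 : (∫ y in g..G 0 f, (y - g) * ρ y 0) = 0 := by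
      rw [← hg]; exact intervalIntegral.integral_same
    have e1 : (∫ y in Iic g, ρ y 0) = f := hGt 0 h0
    have e2 : f - (∫ y in Iic g, ρ y t) = ∫ y in g..G t f, ρ y t := by
      rw [← hdiff t ht, hGt t ht]
    rw [e0, e1, norm_mul, one_mul]
    rw [norm_sub_rev (∫ y in Iic g, ρ y t), e2]
    simp only [smul_zero, sub_zero]
    have hpos : ∀ y, 0 < ρ y t := (hdens t ht).2.1
    have key : ∀ y ∈ uIoc g (G t f), ‖(y - g) * ρ y t‖ ≤ ‖G t f - g‖ * ρ y t := by
      intro y hy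
      rw [norm_mul, Real.norm_of_nonneg (hpos y).le]
      refine mul_le_mul_of_nonneg_right ?_ (hpos y).le
      exact abs_sub_left_of_mem_uIcc (uIoc_subset_uIcc hy)
    have hii : IntervalIntegrable (fun y => ‖G t f - g‖ * ρ y t) volume g (G t f) :=
      ((hI1 t ht).const_mul _).intervalIntegrable
    have := intervalIntegral.norm_integral_le_abs_of_norm_le
      ((ae_restrict_iff' measurableSet_uIoc).2 (Eventually.of_forall key)) hii
    rwa [intervalIntegral.integral_const_mul, abs_mul, abs_norm] at this
  have hS := hM.add hR
  rw [add_zero] at hS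
  refine hS.congr_of_eventuallyEq ?_
  filter_upwards [hnear] with t ht
  have e : (∫ y in g..G t f, (y - g) * ρ y t)
      = (∫ y in g..G t f, y * ρ y t) - g * ∫ y in g..G t f, ρ y t := by
    rw [← intervalIntegral.integral_const_mul, ← intervalIntegral.integral_sub
      (hI2 t ht).intervalIntegrable ((hI1 t ht).const_mul g).intervalIntegrable]
    congr 1; funext y; ring
  simp only [Pi.add_apply]
  rw [e, ← hdiff t ht, ← hdiff2 t ht, hGt t ht]
  ring
end

section
/- Let ρ be a positive probability density on ℝ with cdf C and inverse cdf G, and let φ : [0,1] → ℝ be continuous and bounded. Then for every f ∈ (0,1), ∫_{−∞}^{G(f)} ( ∫_{−∞}^y ρ(u) φ(C(u)) du ) dy = ∫_0^f ( 1 / ρ(G(g)) ) ( ∫_0^g φ(l) dl ) dg; that is, the two expressions for the transformed Fréchet derivative in the spatial variable x and in the cdf variable f coincide. -/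
open MeasureTheory Set Filter

theorem cdf_aux_integrable {ρ : ℝ → ℝ} (hρ : IsPosDensity ρ) : Integrable ρ := by
  by_contra h
  have h1 := hρ.2.2.1
  rw [integral_undef h] at h1
  norm_num at h1

theorem cdf_aux_sub {ρ : ℝ → ℝ} (hρ : IsPosDensity ρ) (a b : ℝ) :
    cdfOf ρ b - cdfOf ρ a = ∫ x in a..b, ρ x :=
  intervalIntegral.integral_Iic_sub_Iic (cdf_aux_integrable hρ).integrableOn
    (cdf_aux_integrable hρ).integrableOn

theorem cdf_aux_strictMono {ρ : ℝ → ℝ} (hρ : IsPosDensity ρ) : StrictMono (cdfOf ρ) := by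
  intro a b hab
  have h := cdf_aux_sub hρ a b
  have h2 : 0 < ∫ x in a..b, ρ x :=
    intervalIntegral.intervalIntegral_pos_of_pos (hρ.1.intervalIntegrable a b) hρ.2.1 hab
  linarith

theorem cdf_aux_deriv {ρ : ℝ → ℝ} (hρ : IsPosDensity ρ) (x : ℝ) :
    HasDerivAt (cdfOf ρ) (ρ x) x := by
  have h : cdfOf ρ = fun y => cdfOf ρ 0 + ∫ t in (0:ℝ)..y, ρ t := by
    funext y
    have := cdf_aux_sub hρ 0 y
    linarith
  rw [h]
  exact (hρ.1.integral_hasStrictDerivAt 0 x).hasDerivAt.const_add _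

theorem cdf_aux_nonneg {ρ : ℝ → ℝ} (hρ : IsPosDensity ρ) (x : ℝ) : 0 ≤ cdfOf ρ x :=
  integral_nonneg fun y => (hρ.2.1 y).le

theorem cdf_aux_le {ρ : ℝ → ℝ} (hρ : IsPosDensity ρ) (x : ℝ) : cdfOf ρ x ≤ 1 := by
  rw [← hρ.2.2.1]
  exact setIntegral_le_integral (cdf_aux_integrable hρ)
    (Eventually.of_forall fun y => (hρ.2.1 y).le)

theorem cdf_aux_mem {ρ : ℝ → ℝ} (hρ : IsPosDensity ρ) (x : ℝ) : cdfOf ρ x ∈ Ioo (0:ℝ) 1 :=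
  ⟨(cdf_aux_nonneg hρ (x - 1)).trans_lt (cdf_aux_strictMono hρ (by linarith)),
    (cdf_aux_strictMono hρ (by linarith : x < x + 1)).trans_le (cdf_aux_le hρ (x + 1))⟩

theorem cdf_aux_image {ρ : ℝ → ℝ} (hρ : IsPosDensity ρ)
    {G : ℝ → ℝ} (hG : ∀ f ∈ Ioo (0:ℝ) 1, cdfOf ρ (G f) = f) (y : ℝ) :
    cdfOf ρ '' Iic y = Ioc 0 (cdfOf ρ y) := by
  ext g
  constructor
  · rintro ⟨x, hx, rfl⟩
    exact ⟨(cdf_aux_mem hρ x).1, (cdf_aux_strictMono hρ).monotone hx⟩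
  · rintro ⟨h0, h1⟩
    have hg := hG g ⟨h0, h1.trans_lt (cdf_aux_mem hρ y).2⟩
    refine ⟨G g, ?_, hg⟩
    rw [← hg] at h1
    exact (cdf_aux_strictMono hρ).le_iff_le.mp h1

theorem cdf_aux_change {ρ : ℝ → ℝ} (hρ : IsPosDensity ρ)
    {G : ℝ → ℝ} (hG : ∀ f ∈ Ioo (0:ℝ) 1, cdfOf ρ (G f) = f) (F : ℝ → ℝ) (y : ℝ) :
    ∫ g in (0:ℝ)..(cdfOf ρ y), F g = ∫ u in Iic y, ρ u * F (cdfOf ρ u) := by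
  rw [intervalIntegral.integral_of_le (cdf_aux_nonneg hρ y), ← cdf_aux_image hρ hG,
    integral_image_eq_integral_abs_deriv_smul measurableSet_Iic
      (fun x _ => (cdf_aux_deriv hρ x).hasDerivWithinAt) (cdf_aux_strictMono hρ).injective.injOn]
  simp only [smul_eq_mul, abs_of_pos (hρ.2.1 _)]

theorem stmt3 (ρ : ℝ → ℝ) (hρ : IsPosDensity ρ)
    (G : ℝ → ℝ) (hG : ∀ f ∈ Ioo (0:ℝ) 1, cdfOf ρ (G f) = f)
    (φ : ℝ → ℝ) (hφc : ContinuousOn φ (Icc 0 1))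
    (hφb : ∃ Cb : ℝ, ∀ f ∈ Icc (0:ℝ) 1, |φ f| ≤ Cb)
    (f : ℝ) (hf : f ∈ Ioo (0:ℝ) 1) :
    (∫ y in Iic (G f), ∫ u in Iic y, ρ u * φ (cdfOf ρ u))
      = ∫ g in (0:ℝ)..f, (1 / ρ (G g)) * ∫ l in (0:ℝ)..g, φ l := by
  have hGC : ∀ x, G (cdfOf ρ x) = x := fun x =>
    (cdf_aux_strictMono hρ).injective (hG _ (cdf_aux_mem hρ x))
  have h := cdf_aux_change hρ hG (fun g => (1 / ρ (G g)) * ∫ l in (0:ℝ)..g, φ l) (G f)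
  rw [hG f hf] at h
  rw [h]
  congr 1
  funext y
  rw [hGC, cdf_aux_change hρ hG φ y, ← mul_assoc, mul_one_div_cancel (hρ.2.1 y).ne', one_mul]
end

section
/- Let ρ : ℝ × (0,T) → ℝ be jointly smooth with ρ(·,t) a positive probability density for each t, let φ : [0,1] × (0,T) → ℝ be continuous, and let ψ : ℝ × (0,T) → ℝ be smooth and satisfy, for all f ∈ (0,1) and t, ψ(G_t(f),t) = − ∫_0^f ( 1/ρ(G_t(g),t) ) ( ∫_0^g φ(l,t) dl ) dg. Suppose ρ satisfies the continuity equation ∂_t ρ(x,t) = − ∂_x ( ρ(x,t) ∂_x ψ(x,t) ), and that ρ ∂_x ψ → 0 and x ρ ∂_x ψ → 0 as x → ±∞ for each t. Then the Lorenz curve of ρ(·,t) satisfies ∂_t ℒ_t(f) = − ∫_0^f ∫_0^g φ(l,t) dl dg for all f ∈ (0,1) and t. -/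
open MeasureTheory Set Filter

namespace LorenzAux

lemma dens_int {r : ℝ → ℝ} (h : IsPosDensity r) : Integrable r := by
  by_contra hn
  have := h.2.2.1
  rw [integral_undef hn] at this
  norm_num at this

lemma cdf_sub {r : ℝ → ℝ} (h : IsPosDensity r) (a b : ℝ) :
    cdfOf r b - cdfOf r a = ∫ y in a..b, r y :=
  intervalIntegral.integral_Iic_sub_Iic (dens_int h).integrableOn (dens_int h).integrableOn

lemma cdf_deriv {r : ℝ → ℝ} (h : IsPosDensity r) (x : ℝ) : HasDerivAt (cdfOf r) (r x) x := by
  have e : cdfOf r = fun b => cdfOf r 0 + ∫ y in (0:ℝ)..b, r y := by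
    funext b
    rw [← cdf_sub h]; ring
  rw [e]
  exact (h.1.integral_hasStrictDerivAt 0 x).hasDerivAt.const_add _

lemma cdf_cont {r : ℝ → ℝ} (h : IsPosDensity r) : Continuous (cdfOf r) :=
  continuous_iff_continuousAt.2 fun x => (cdf_deriv h x).continuousAt

lemma cdf_mono {r : ℝ → ℝ} (h : IsPosDensity r) : StrictMono (cdfOf r) :=
  strictMono_of_deriv_pos fun x => by rw [(cdf_deriv h x).deriv]; exact h.2.1 x

lemma cdf_nonneg {r : ℝ → ℝ} (h : IsPosDensity r) (x : ℝ) : 0 ≤ cdfOf r x :=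
  integral_nonneg fun y => (h.2.1 y).le

lemma cdf_pos {r : ℝ → ℝ} (h : IsPosDensity r) (x : ℝ) : 0 < cdfOf r x :=
  lt_of_le_of_lt (cdf_nonneg h (x-1)) (cdf_mono h (by linarith))

lemma cdf_le_one {r : ℝ → ℝ} (h : IsPosDensity r) (x : ℝ) : cdfOf r x ≤ 1 := by
  rw [← h.2.2.1]
  exact setIntegral_le_integral (dens_int h) (Eventually.of_forall fun y => (h.2.1 y).le)

lemma cdf_lt_one {r : ℝ → ℝ} (h : IsPosDensity r) (x : ℝ) : cdfOf r x < 1 :=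
  lt_of_lt_of_le (cdf_mono h (show x < x + 1 by linarith)) (cdf_le_one h _)

lemma cdf_bot (r : ℝ → ℝ) : Tendsto (cdfOf r) atBot (nhds 0) :=
  tendsto_integral_Iic_zero (f := r) (μ := volume) (l := atBot) (a := id) tendsto_id

lemma mom_int {r : ℝ → ℝ} (h : IsPosDensity r) : Integrable (fun y => y * r y) := by
  refine h.2.2.2.mono ((continuous_id.mul h.1).aestronglyMeasurable)
    (Eventually.of_forall fun y => ?_)
  simp

lemma cdf_fubini {r : ℝ → ℝ} (h : IsPosDensity r) (x : ℝ) :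
    IntegrableOn (cdfOf r) (Iic x) ∧
      ∫ y in Iic x, cdfOf r y = ∫ y in Iic x, (x - y) * r y := by
  have hD : MeasurableSet {p : ℝ × ℝ | p.2 ≤ p.1} := measurableSet_le measurable_snd measurable_fst
  let F : ℝ → ℝ → ℝ := fun y z => (Iic y).indicator r z
  have hFu : Function.uncurry F = {p : ℝ × ℝ | p.2 ≤ p.1}.indicator (fun p => r p.2) := by
    funext p
    simp [F, Function.uncurry, indicator]
  have hm : Measurable (Function.uncurry F) := by
    rw [hFu]
    exact (h.1.measurable.comp measurable_snd).indicator hD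
  have hF2 : ∀ z, (fun y => F y z) = (Ici z).indicator (fun _ => r z) := by
    intro z; funext y; simp [F, indicator]
  have hz : ∀ z, ∫ y in Iic x, F y z = (Iic x).indicator (fun z => (x - z) * r z) z := by
    intro z
    rw [hF2, setIntegral_indicator measurableSet_Ici, setIntegral_const, Iic_inter_Ici]
    by_cases hzx : z ≤ x
    · simp [indicator, hzx]
    · simp [indicator, hzx]
  have hnn : ∀ y z, 0 ≤ F y z := fun y z => indicator_nonneg (fun w _ => (h.2.1 w).le) z
  have hI : Integrable (Function.uncurry F) ((volume.restrict (Iic x)).prod volume) := by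
    rw [integrable_prod_iff' hm.aestronglyMeasurable]
    constructor
    · refine Eventually.of_forall fun z => ?_
      show Integrable (fun y => F y z) (volume.restrict (Iic x))
      rw [hF2, integrable_indicator_iff measurableSet_Ici, IntegrableOn,
        Measure.restrict_restrict measurableSet_Ici, Ici_inter_Iic]
      exact integrableOn_const (by simp)
    · have : (fun z => ∫ y in Iic x, ‖Function.uncurry F (y, z)‖)
          = (Iic x).indicator (fun z => (x - z) * r z) := by
        funext z
        rw [← hz]
        refine integral_congr_ae (Eventually.of_forall fun y => ?_)
        simp only [Function.uncurry]
        exact Real.norm_of_nonneg (hnn y z)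
      rw [this]
      refine Integrable.indicator ?_ measurableSet_Iic
      have := ((dens_int h).const_mul x).sub (mom_int h)
      refine this.congr (Eventually.of_forall fun y => ?_)
      simp; ring
  have hC : ∀ y, ∫ z, F y z = cdfOf r y := fun y => integral_indicator measurableSet_Iic
  constructor
  · have := hI.integral_prod_left
    exact this.congr (Eventually.of_forall fun y => hC y)
  · have := integral_integral_swap hI
    simp only [hC, hz] at this
    rw [this, integral_indicator measurableSet_Iic]

/-- Second-order control of the Lorenz integral. -/
lemma lorenz_bound {r : ℝ → ℝ} (h : IsPosDensity r) (x g : ℝ) :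
    |(∫ y in Iic g, y * r y) - (x * cdfOf r g - ∫ y in Iic x, cdfOf r y)|
      ≤ |g - x| * |cdfOf r g - cdfOf r x| := by
  have hi : Integrable (fun y => (y - x) * r y) := by
    have := (mom_int h).sub ((dens_int h).const_mul x)
    refine this.congr (Eventually.of_forall fun y => ?_)
    simp; ring
  have e1 : ∫ y in Iic x, (x - y) * r y = - ∫ y in Iic x, (y - x) * r y := by
    rw [← integral_neg]; congr 1; funext y; ring
  have e2 : ∫ y in Iic g, (y - x) * r y = (∫ y in Iic g, y * r y) - x * cdfOf r g := by
    rw [cdfOf, ← integral_const_mul, ← integral_sub (mom_int h).integrableOn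
      ((dens_int h).const_mul x).integrableOn]
    congr 1; funext y; ring
  have e3 := intervalIntegral.integral_Iic_sub_Iic (hi.integrableOn (s := Iic x))
    (hi.integrableOn (s := Iic g))
  have e4 : (∫ y in Iic g, y * r y) - (x * cdfOf r g - ∫ y in Iic x, cdfOf r y)
      = ∫ y in x..g, (y - x) * r y := by
    rw [(cdf_fubini h x).2, e1, ← e3, e2]; ring
  rw [e4, cdf_sub h, ← abs_abs (g - x), ← abs_mul, ← intervalIntegral.integral_const_mul]
  rw [← Real.norm_eq_abs (∫ y in x..g, (y - x) * r y)]
  refine intervalIntegral.norm_integral_le_abs_of_norm_le (μ := volume) ?_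
    ((continuous_const.mul h.1).intervalIntegrable _ _)
  refine (ae_restrict_iff' measurableSet_uIoc).2 (Eventually.of_forall fun y hy => ?_)
  rw [norm_mul, Real.norm_eq_abs, Real.norm_of_nonneg (h.2.1 y).le]
  refine mul_le_mul_of_nonneg_right ?_ (h.2.1 y).le
  rw [abs_sub_comm g x, abs_sub_comm y x]
  have := abs_sub_left_of_mem_uIcc (uIoc_subset_uIcc hy)
  rw [abs_sub_comm y x, abs_sub_comm g x] at this
  exact this

/-- Change of variables through the cdf. -/
lemma cdf_change {r : ℝ → ℝ} (h : IsPosDensity r) (hs : ∀ f ∈ Ioo (0:ℝ) 1, ∃ x, cdfOf r x = f)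
    (x : ℝ) (k : ℝ → ℝ) :
    ∫ g in (0:ℝ)..cdfOf r x, k g = ∫ y in Iic x, r y * k (cdfOf r y) := by
  have him : cdfOf r '' Iio x = Ioo 0 (cdfOf r x) := by
    ext g; constructor
    · rintro ⟨y, hy, rfl⟩
      exact ⟨cdf_pos h y, cdf_mono h hy⟩
    · rintro ⟨h0, h1⟩
      obtain ⟨y, rfl⟩ := hs g ⟨h0, h1.trans (cdf_lt_one h x)⟩
      exact ⟨y, (cdf_mono h).lt_iff_lt.1 h1, rfl⟩
  rw [intervalIntegral.integral_of_le (cdf_nonneg h x), integral_Ioc_eq_integral_Ioo, ← him,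
    integral_image_eq_integral_abs_deriv_smul measurableSet_Iio
      (fun y _ => (cdf_deriv h y).hasDerivWithinAt) (cdf_mono h).injective.injOn,
    integral_Iic_eq_integral_Iio]
  congr 1; funext y
  rw [abs_of_pos (h.2.1 y), smul_eq_mul]

/-- Identification of the velocity field. -/
lemma velocity {r p : ℝ → ℝ} (h : IsPosDensity r) {G q : ℝ → ℝ}
    (hG : ∀ f ∈ Ioo (0:ℝ) 1, cdfOf r (G f) = f) (hq : Continuous q) {M : ℝ}
    (hM : ∀ l, |q l| ≤ M)
    (hrel : ∀ f ∈ Ioo (0:ℝ) 1, p (G f) = -∫ g in (0:ℝ)..f, (1 / r (G g)) * ∫ l in (0:ℝ)..g, q l)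
    (x : ℝ) : deriv p x = - ∫ l in (0:ℝ)..cdfOf r x, q l := by
  have hGC : ∀ y, G (cdfOf r y) = y := fun y =>
    (cdf_mono h).injective (hG _ ⟨cdf_pos h y, cdf_lt_one h y⟩)
  set Q : ℝ → ℝ := fun g => ∫ l in (0:ℝ)..g, q l with hQ
  have hQc : Continuous Q := intervalIntegral.continuous_primitive
    (fun a b => hq.intervalIntegrable a b) 0
  have hQC : Continuous fun y => Q (cdfOf r y) := hQc.comp (cdf_cont h)
  have hint : ∀ y, IntegrableOn (fun y => Q (cdfOf r y)) (Iic y) := by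
    intro y
    refine Integrable.mono' ((cdf_fubini h y).1.const_mul M) hQC.aestronglyMeasurable
      (Eventually.of_forall fun z => ?_)
    have := intervalIntegral.norm_integral_le_of_norm_le_const (a := 0) (b := cdfOf r z)
      (f := q) (C := M) (fun l _ => hM l)
    rwa [sub_zero, abs_of_nonneg (cdf_nonneg h z)] at this
  have hp : p = fun y => -((∫ z in Iic (0:ℝ), Q (cdfOf r z)) + ∫ z in (0:ℝ)..y, Q (cdfOf r z)) := by
    funext y
    have h1 := hrel _ ⟨cdf_pos h y, cdf_lt_one h y⟩
    rw [hGC, cdf_change h (fun f hf => ⟨G f, hG f hf⟩) y] at h1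
    rw [h1, ← intervalIntegral.integral_Iic_sub_Iic (hint 0) (hint y)]
    rw [add_sub_cancel]
    congr 2; funext z
    rw [hGC]
    have := (h.2.1 z).ne'
    simp only [hQ]
    field_simp
  rw [hp]
  exact ((hQC.integral_hasStrictDerivAt 0 x).hasDerivAt.const_add _).neg.deriv

/-- Flow identities for the cdf and its primitive. -/
lemma flow {ρ w : ℝ → ℝ → ℝ} {a s M : ℝ} (has : a ≤ s)
    (hρs : ContDiff ℝ (⊤ : ℕ∞) (fun p : ℝ × ℝ => ρ p.1 p.2))
    (hws : ContDiff ℝ (⊤ : ℕ∞) (fun p : ℝ × ℝ => w p.1 p.2))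
    (hdens : ∀ t ∈ Icc a s, IsPosDensity (fun x => ρ x t))
    (hpde : ∀ x : ℝ, ∀ t ∈ Icc a s, deriv (fun s => ρ x s) t = -deriv (fun y => w y t) x)
    (hb : ∀ x : ℝ, ∀ t ∈ Icc a s, |w x t| ≤ M * ρ x t) :
    (∀ x, cdfOf (fun x => ρ x s) x = cdfOf (fun x => ρ x a) x - ∫ τ in a..s, w x τ) ∧
    (∀ x, ∫ y in Iic x, cdfOf (fun x => ρ x s) y =
      (∫ y in Iic x, cdfOf (fun x => ρ x a) y) - ∫ τ in a..s, ∫ y in Iic x, w y τ) := by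
  have hsm : s ∈ Icc a s := ⟨has, le_rfl⟩
  have ham : a ∈ Icc a s := ⟨le_rfl, has⟩
  have hwc : Continuous (fun p : ℝ × ℝ => w p.1 p.2) := hws.continuous
  have hwx : ∀ x, Continuous (fun τ => w x τ) := fun x => hwc.comp (by fun_prop : Continuous fun τ : ℝ => (x, τ))
  have hwt : ∀ τ, Continuous (fun x => w x τ) := fun τ => hwc.comp (by fun_prop : Continuous fun x : ℝ => (x, τ))
  have hI : Integrable (Function.uncurry w) (volume.prod (volume.restrict (Ioc a s))) := by
    have hm : AEStronglyMeasurable (Function.uncurry w)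
      (volume.prod (volume.restrict (Ioc a s))) := hwc.aestronglyMeasurable
    have hint : ∀ t ∈ Icc a s, Integrable (fun x => w x t) := fun t ht =>
      Integrable.mono' ((dens_int (hdens t ht)).const_mul M) (hwt t).aestronglyMeasurable
        (Eventually.of_forall fun x => hb x t ht)
    rw [integrable_prod_iff' hm]
    constructor
    · exact (ae_restrict_iff' measurableSet_Ioc).2
        (Eventually.of_forall fun t ht => hint t (Ioc_subset_Icc_self ht))
    · refine Integrable.mono' (g := fun _ => M) (integrableOn_const (by simp)) ?_ ?_
      · exact hm.norm.prod_swap.integral_prod_right'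
      · refine (ae_restrict_iff' measurableSet_Ioc).2
          (Eventually.of_forall fun t ht => ?_)
        have ht' := Ioc_subset_Icc_self ht
        rw [Real.norm_of_nonneg (integral_nonneg fun _ => norm_nonneg _)]
        have h1 := (hdens t ht').2.2.1
        calc ∫ x, ‖Function.uncurry w (x, t)‖ ≤ ∫ x, M * ρ x t :=
              integral_mono (hint t ht').norm ((dens_int (hdens t ht')).const_mul M)
                (fun x => hb x t ht')
          _ = M := by rw [integral_const_mul, h1, mul_one]
  have hk : Integrable (fun x => ∫ τ in a..s, w x τ) := by
    refine hI.integral_prod_left.congr (Eventually.of_forall fun x => ?_)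
    simp only [intervalIntegral.integral_of_le has]
    rfl
  -- derivative in the space variable of the time integral
  let D : ℝ → ℝ → ℝ := fun x τ => fderiv ℝ (fun p : ℝ × ℝ => w p.1 p.2) (x, τ) (1, 0)
  have hDc : Continuous (fun p : ℝ × ℝ => D p.1 p.2) := by
    have := hws.continuous_fderiv (by simp)
    exact this.clm_apply continuous_const
  have hDd : ∀ x τ, HasDerivAt (fun y => w y τ) (D x τ) x := by
    intro x τ
    have h1 : HasFDerivAt (fun p : ℝ × ℝ => w p.1 p.2) _ (x, τ) :=
      (hws.differentiable (by simp) (x, τ)).hasFDerivAt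
    have h2 : HasDerivAt (fun y : ℝ => (y, τ)) ((1:ℝ), (0:ℝ)) x :=
      (hasDerivAt_id x).prodMk (hasDerivAt_const x τ)
    exact h1.comp_hasDerivAt x h2
  have hder : ∀ x, HasDerivAt (fun x => ∫ τ in a..s, w x τ) (∫ τ in a..s, D x τ) x := by
    intro x
    obtain ⟨B, hB⟩ := ((isCompact_Icc (a := x - 1) (b := x + 1)).prod
      (isCompact_Icc (a := a) (b := s))).exists_bound_of_continuousOn hDc.continuousOn
    refine (intervalIntegral.hasDerivAt_integral_of_dominated_loc_of_deriv_le
      (s := Icc (x-1) (x+1)) (bound := fun _ => B) (Icc_mem_nhds (by linarith) (by linarith))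
      (Eventually.of_forall fun y => (hwx y).aestronglyMeasurable)
      ((hwx x).intervalIntegrable _ _)
      ((hDc.comp (by fun_prop : Continuous fun τ : ℝ => (x, τ))).aestronglyMeasurable)
      (Eventually.of_forall fun τ hτ y hy => ?_) (by simp)
      (Eventually.of_forall fun τ hτ y hy => hDd y τ)).2
    rw [uIoc_of_le has] at hτ
    exact hB (y, τ) ⟨hy, Ioc_subset_Icc_self hτ⟩
  have hft : ∀ x, ∫ τ in a..s, D x τ = ρ x a - ρ x s := by
    intro x
    have hρx : ContDiff ℝ (⊤ : ℕ∞) (fun τ => ρ x τ) :=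
      hρs.comp (by fun_prop : ContDiff ℝ (⊤ : ℕ∞) fun τ : ℝ => (x, τ))
    have h1 : ∫ τ in a..s, deriv (fun τ => ρ x τ) τ = ρ x s - ρ x a :=
      intervalIntegral.integral_deriv_eq_sub
        (fun τ _ => hρx.differentiable (by simp) τ)
        ((hρx.continuous_deriv (by simp)).intervalIntegrable _ _)
    have h2 : ∫ τ in a..s, deriv (fun τ => ρ x τ) τ = ∫ τ in a..s, - D x τ := by
      refine intervalIntegral.integral_congr fun τ hτ => ?_
      rw [uIcc_of_le has] at hτ
      rw [hpde x τ hτ, (hDd x τ).deriv]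
    rw [intervalIntegral.integral_neg, h1] at h2
    linarith
  let K : ℝ → ℝ := fun x => cdfOf (fun x => ρ x s) x - cdfOf (fun x => ρ x a) x
    + ∫ τ in a..s, w x τ
  have hK : ∀ x, HasDerivAt K 0 x := by
    intro x
    have := ((cdf_deriv (hdens s hsm) x).sub (cdf_deriv (hdens a ham) x)).add (hder x)
    rw [hft] at this
    have e : ρ x s - ρ x a + (ρ x a - ρ x s) = 0 := by ring
    rw [e] at this
    exact this
  have hKc : ∀ x y, K x = K y :=
    is_const_of_deriv_eq_zero (fun x => (hK x).differentiableAt) (fun x => (hK x).deriv)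
  have hlim : Tendsto (fun x => ∫ τ in a..s, w x τ) atBot (nhds (K 0)) := by
    have h1 := ((cdf_bot (fun x => ρ x s)).sub (cdf_bot (fun x => ρ x a))).const_sub (K 0)
    simp only [sub_zero] at h1
    refine h1.congr fun x => ?_
    rw [hKc 0 x]
    simp only [K]; ring
  have hK0 : K 0 = 0 := by
    refine IntegrableAtFilter.eq_zero_of_tendsto (hk.integrableAtFilter atBot) ?_ hlim
    intro S hS
    rcases mem_atBot_sets.1 hS with ⟨b, hb⟩
    apply le_antisymm (le_top)
    rw [← Real.volume_Iic (a := b)]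
    exact measure_mono hb
  have hone : ∀ x, cdfOf (fun x => ρ x s) x = cdfOf (fun x => ρ x a) x - ∫ τ in a..s, w x τ := by
    intro x
    have := hKc x 0
    rw [hK0] at this
    simp only [K] at this
    linarith
  refine ⟨hone, fun x => ?_⟩
  have hI2 : Integrable (Function.uncurry w)
      ((volume.restrict (Iic x)).prod (volume.restrict (Ioc a s))) := by
    refine hI.mono_measure ?_
    exact Measure.prod_mono Measure.restrict_le_self le_rfl
  have hsw := integral_integral_swap hI2
  rw [intervalIntegral.integral_of_le has, ← hsw]
  have hL : Integrable (fun y => ∫ τ in Ioc a s, w y τ) (volume.restrict (Iic x)) :=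
    hI2.integral_prod_left
  rw [← integral_sub (cdf_fubini (hdens a ham) x).1 hL]
  refine integral_congr_ae (Eventually.of_forall fun y => ?_)
  simp only [hone, intervalIntegral.integral_of_le has]

end LorenzAux

theorem stmt6 (T : ℝ) (hT : 0 < T) (ρ ψ : ℝ → ℝ → ℝ)
    (hρs : ContDiff ℝ (⊤ : ℕ∞) (fun p : ℝ × ℝ => ρ p.1 p.2))
    (hψs : ContDiff ℝ (⊤ : ℕ∞) (fun p : ℝ × ℝ => ψ p.1 p.2))
    (hdens : ∀ t ∈ Ioo 0 T, IsPosDensity (fun x => ρ x t))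
    (G : ℝ → ℝ → ℝ)
    (hG : ∀ t ∈ Ioo 0 T, ∀ f ∈ Ioo (0:ℝ) 1, cdfOf (fun x => ρ x t) (G t f) = f)
    (φ : ℝ → ℝ → ℝ)
    (hφ : ContinuousOn (fun p : ℝ × ℝ => φ p.1 p.2) (Icc 0 1 ×ˢ Ioo 0 T))
    (hrel : ∀ t ∈ Ioo 0 T, ∀ f ∈ Ioo (0:ℝ) 1,
      ψ (G t f) t = -∫ g in (0:ℝ)..f, (1 / ρ (G t g) t) * ∫ l in (0:ℝ)..g, φ l t)
    (hpde : ∀ x : ℝ, ∀ t ∈ Ioo 0 T,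
      deriv (fun s => ρ x s) t = -deriv (fun y => ρ y t * deriv (fun z => ψ z t) y) x)
    (hbc : ∀ t ∈ Ioo 0 T,
      Tendsto (fun x => ρ x t * deriv (fun z => ψ z t) x) atTop (nhds 0) ∧
      Tendsto (fun x => ρ x t * deriv (fun z => ψ z t) x) atBot (nhds 0))
    (hbcx : ∀ t ∈ Ioo 0 T,
      Tendsto (fun x => x * (ρ x t * deriv (fun z => ψ z t) x)) atTop (nhds 0) ∧
      Tendsto (fun x => x * (ρ x t * deriv (fun z => ψ z t) x)) atBot (nhds 0)) :
    ∀ f ∈ Ioo (0:ℝ) 1, ∀ t ∈ Ioo 0 T,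
      HasDerivAt (fun s => ∫ y in Iic (G s f), y * ρ y s)
        (-∫ g in (0:ℝ)..f, ∫ l in (0:ℝ)..g, φ l t) t := by
  intro f hf t ht
  obtain ⟨a, ha0, hat⟩ := exists_between ht.1
  obtain ⟨b, htb, hbT⟩ := exists_between ht.2
  have hab : a ≤ b := (hat.trans htb).le
  have hsub : ∀ τ ∈ Icc a b, τ ∈ Ioo 0 T := fun τ hτ => ⟨ha0.trans_le hτ.1, hτ.2.trans_lt hbT⟩
  -- clamped version of `φ`
  let φ' : ℝ → ℝ → ℝ := fun l τ => φ (max 0 (min 1 l)) (max a (min b τ))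
  have hcl : ∀ l : ℝ, max 0 (min 1 l) ∈ Icc (0:ℝ) 1 := fun l =>
    ⟨le_max_left _ _, max_le zero_le_one (min_le_left _ _)⟩
  have hct : ∀ τ : ℝ, max a (min b τ) ∈ Icc a b := fun τ =>
    ⟨le_max_left _ _, max_le hab (min_le_left _ _)⟩
  have hφ'c : Continuous (fun p : ℝ × ℝ => φ' p.1 p.2) := by
    have : Continuous fun p : ℝ × ℝ => (max 0 (min 1 p.1), max a (min b p.2)) := by fun_prop
    exact hφ.comp_continuous this (fun p => ⟨hcl p.1, hsub _ (hct p.2)⟩)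
  have hφ'e : ∀ l ∈ Icc (0:ℝ) 1, ∀ τ ∈ Icc a b, φ' l τ = φ l τ := by
    intro l hl τ hτ
    simp only [φ', min_eq_right hl.2, max_eq_right hl.1, min_eq_right hτ.2, max_eq_right hτ.1]
  obtain ⟨M, hM⟩ := ((isCompact_Icc (a := (0:ℝ)) (b := 1)).prod
    (isCompact_Icc (a := a) (b := b))).exists_bound_of_continuousOn hφ'c.continuousOn
  have hM' : ∀ l τ, |φ' l τ| ≤ M := by
    intro l τ
    have := hM (max 0 (min 1 l), max a (min b τ)) ⟨hcl l, hct τ⟩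
    rw [Real.norm_eq_abs, hφ'e _ (hcl l) _ (hct τ)] at this
    exact this
  have hM0 : 0 ≤ M := (abs_nonneg _).trans (hM' 0 0)
  have hφ't : ∀ τ, Continuous fun l => φ' l τ := fun τ =>
    hφ'c.comp (by fun_prop : Continuous fun l : ℝ => (l, τ))
  have hprim : ∀ τ ∈ Icc a b, ∀ g ∈ Icc (0:ℝ) 1,
      ∫ l in (0:ℝ)..g, φ' l τ = ∫ l in (0:ℝ)..g, φ l τ := by
    intro τ hτ g hg
    refine intervalIntegral.integral_congr fun l hl => ?_
    rw [uIcc_of_le hg.1] at hl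
    exact hφ'e l ⟨hl.1, hl.2.trans hg.2⟩ τ hτ
  -- velocity
  have hv : ∀ τ ∈ Icc a b, ∀ x, deriv (fun z => ψ z τ) x
      = -∫ l in (0:ℝ)..cdfOf (fun x => ρ x τ) x, φ' l τ := by
    intro τ hτ x
    refine LorenzAux.velocity (r := fun x => ρ x τ) (p := fun z => ψ z τ) (q := fun l => φ' l τ)
      (hdens τ (hsub τ hτ)) (hG τ (hsub τ hτ)) (hφ't τ) (fun l => hM' l τ) ?_ x
    intro f hf
    rw [hrel τ (hsub τ hτ) f hf]
    congr 1
    refine intervalIntegral.integral_congr fun g hg => ?_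
    rw [uIcc_of_le hf.1.le] at hg
    rw [hprim τ hτ g ⟨hg.1, hg.2.trans hf.2.le⟩]
  let w : ℝ → ℝ → ℝ := fun x τ => ρ x τ * deriv (fun z => ψ z τ) x
  have hws : ContDiff ℝ (⊤ : ℕ∞) (fun p : ℝ × ℝ => w p.1 p.2) := by
    have hd : ∀ p : ℝ × ℝ, deriv (fun z => ψ z p.2) p.1
        = fderiv ℝ (fun p : ℝ × ℝ => ψ p.1 p.2) p (1, 0) := by
      intro p
      have h1 : HasFDerivAt (fun p : ℝ × ℝ => ψ p.1 p.2) _ (p.1, p.2) :=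
        (hψs.differentiable (by simp) (p.1, p.2)).hasFDerivAt
      have h2 : HasDerivAt (fun y : ℝ => (y, p.2)) ((1:ℝ), (0:ℝ)) p.1 :=
        (hasDerivAt_id p.1).prodMk (hasDerivAt_const p.1 p.2)
      exact (h1.comp_hasDerivAt p.1 h2).deriv
    simp only [w, hd]
    exact hρs.mul ((hψs.fderiv_right (m := (⊤ : ℕ∞)) (by simp)).clm_apply contDiff_const)
  have hwx : ∀ x, Continuous (fun τ => w x τ) := fun x =>
    hws.continuous.comp (by fun_prop : Continuous fun τ : ℝ => (x, τ))
  have hwb : ∀ x, ∀ τ ∈ Icc a b, |w x τ| ≤ M * ρ x τ := by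
    intro x τ hτ
    have hd := hdens τ (hsub τ hτ)
    have h1 := intervalIntegral.norm_integral_le_of_norm_le_const (a := 0)
      (b := cdfOf (fun x => ρ x τ) x) (f := fun l => φ' l τ) (C := M) (fun l _ => hM' l τ)
    rw [sub_zero, abs_of_nonneg (LorenzAux.cdf_nonneg hd x)] at h1
    have h2 : M * cdfOf (fun x => ρ x τ) x ≤ M * 1 :=
      mul_le_mul_of_nonneg_left (LorenzAux.cdf_le_one hd x) hM0
    have h3 : 0 < ρ x τ := hd.2.1 x
    simp only [w]
    rw [abs_mul, abs_of_pos h3, hv τ hτ, abs_neg, mul_comm]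
    rw [Real.norm_eq_abs] at h1
    exact mul_le_mul_of_nonneg_right (by linarith) h3.le
  have hflow : ∀ s ∈ Icc a b, _ := fun s hs =>
    LorenzAux.flow (ρ := ρ) (w := w) (a := a) (s := s) (M := M) hs.1 hρs hws
      (fun τ hτ => hdens τ (hsub τ ⟨hτ.1, hτ.2.trans hs.2⟩))
      (fun x τ hτ => hpde x τ (hsub τ ⟨hτ.1, hτ.2.trans hs.2⟩))
      (fun x τ hτ => hwb x τ ⟨hτ.1, hτ.2.trans hs.2⟩)
  have htab : t ∈ Icc a b := ⟨hat.le, htb.le⟩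
  have hnh : ∀ᶠ s in nhds t, s ∈ Icc a b := Icc_mem_nhds hat htb
  -- time derivative of the cdf at a fixed point
  have hCt : ∀ x, HasDerivAt (fun s => cdfOf (fun x => ρ x s) x) (-w x t) t := by
    intro x
    have h1 : HasDerivAt (fun s => cdfOf (fun x => ρ x a) x - ∫ τ in a..s, w x τ) (-w x t) t :=
      ((hwx x).integral_hasStrictDerivAt a t).hasDerivAt.const_sub _
    exact h1.congr_of_eventuallyEq (hnh.mono fun s hs => (hflow s hs).1 x)
  set x := G t f with hx
  have hCx : cdfOf (fun x => ρ x t) x = f := hG t ht f hf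
  -- continuity of the quantile
  have hGc : Tendsto (fun s => G s f) (nhds t) (nhds x) := by
    rw [tendsto_order]
    have hmt := LorenzAux.cdf_mono (hdens t ht)
    constructor
    · intro y hy
      have h1 : cdfOf (fun x => ρ x t) y < f := hCx ▸ hmt hy
      filter_upwards [hnh, (hCt y).continuousAt.eventually_lt_const h1] with s hs hys
      rw [← hG s (hsub s hs) f hf] at hys
      exact (LorenzAux.cdf_mono (hdens s (hsub s hs))).lt_iff_lt.1 hys
    · intro y hy
      have h1 : f < cdfOf (fun x => ρ x t) y := hCx ▸ hmt hy
      filter_upwards [hnh, (hCt y).continuousAt.eventually_const_lt h1] with s hs hys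
      rw [← hG s (hsub s hs) f hf] at hys
      exact (LorenzAux.cdf_mono (hdens s (hsub s hs))).lt_iff_lt.1 hys
  -- main part
  let c : ℝ → ℝ := fun τ => cdfOf (fun x => ρ x a) x - ∫ r in a..τ, w x r
  have hcc : Continuous c := continuous_const.sub
    (intervalIntegral.continuous_primitive (fun u v => (hwx x).intervalIntegrable u v) a)
  have hcC : ∀ τ ∈ Icc a b, cdfOf (fun x => ρ x τ) x = c τ := fun τ hτ => (hflow τ hτ).1 x
  let Ψ : ℝ → ℝ := fun τ => ∫ g in (0:ℝ)..c τ, ∫ l in (0:ℝ)..g, φ' l τ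
  have hΦc : Continuous (fun p : ℝ × ℝ => ∫ l in (0:ℝ)..p.2, φ' l p.1) :=
    intervalIntegral.continuous_parametric_intervalIntegral_of_continuous
      (f := fun (p : ℝ × ℝ) l => φ' l p.1) (s := fun p : ℝ × ℝ => p.2)
      (hφ'c.comp (by fun_prop : Continuous fun q : (ℝ × ℝ) × ℝ => (q.2, q.1.1))) continuous_snd
  have hΨc : Continuous Ψ :=
    intervalIntegral.continuous_parametric_intervalIntegral_of_continuous
      (f := fun (τ : ℝ) g => ∫ l in (0:ℝ)..g, φ' l τ) (s := c) hΦc hcc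
  have hΨw : ∀ τ ∈ Icc a b, ∫ y in Iic x, w y τ = - Ψ τ := by
    intro τ hτ
    have h1 := LorenzAux.cdf_change (hdens τ (hsub τ hτ))
      (fun f hf => ⟨G τ f, hG τ (hsub τ hτ) f hf⟩) x (fun g => ∫ l in (0:ℝ)..g, φ' l τ)
    simp only [Ψ]
    rw [← hcC τ hτ, h1, ← integral_neg]
    congr 1; funext y
    simp only [w]
    rw [hv τ hτ]; ring
  have hΨt : Ψ t = ∫ g in (0:ℝ)..f, ∫ l in (0:ℝ)..g, φ l t := by
    simp only [Ψ]
    rw [← hcC t htab, hCx]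
    refine intervalIntegral.integral_congr fun g hg => ?_
    rw [uIcc_of_le hf.1.le] at hg
    exact hprim t htab g ⟨hg.1, hg.2.trans hf.2.le⟩
  have hA : HasDerivAt (fun s => x * f - ∫ y in Iic x, cdfOf (fun x => ρ x s) y) (-Ψ t) t := by
    have h1 : HasDerivAt (fun s => (x * f - ∫ y in Iic x, cdfOf (fun x => ρ x a) y)
        - ∫ τ in a..s, Ψ τ) (-Ψ t) t :=
      (hΨc.integral_hasStrictDerivAt a t).hasDerivAt.const_sub _
    refine h1.congr_of_eventuallyEq (hnh.mono fun s hs => ?_)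
    have h2 : ∫ τ in a..s, ∫ y in Iic x, w y τ = ∫ τ in a..s, - Ψ τ := by
      refine intervalIntegral.integral_congr fun τ hτ => ?_
      rw [uIcc_of_le hs.1] at hτ
      exact hΨw τ ⟨hτ.1, hτ.2.trans hs.2⟩
    simp only
    rw [(hflow s hs).2 x, h2, intervalIntegral.integral_neg]
    ring
  let E : ℝ → ℝ := fun s => (∫ y in Iic (G s f), y * ρ y s)
    - (x * f - ∫ y in Iic x, cdfOf (fun x => ρ x s) y)
  have hEb : ∀ s ∈ Icc a b, |E s| ≤ |G s f - x| * |cdfOf (fun x => ρ x s) x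
      - cdfOf (fun x => ρ x t) x| := by
    intro s hs
    have h1 := LorenzAux.lorenz_bound (hdens s (hsub s hs)) x (G s f)
    rw [hG s (hsub s hs) f hf] at h1
    rw [hCx, abs_sub_comm _ f]
    exact h1
  have hEt : E t = 0 := by
    have := hEb t htab
    rw [sub_self, abs_zero, zero_mul] at this
    exact abs_nonpos_iff.1 this
  have hE : HasDerivAt E 0 t := by
    rw [hasDerivAt_iff_isLittleO]
    simp only [hEt, sub_zero, smul_zero]
    have hO := (hCt x).isBigO_sub
    have ho : (fun s => G s f - x) =o[nhds t] (fun _ => (1:ℝ)) := by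
      rw [Asymptotics.isLittleO_one_iff]
      simpa using hGc.sub_const x
    have h3 := ho.mul_isBigO hO
    simp only [one_mul] at h3
    refine (Asymptotics.IsBigO.of_bound 1 (hnh.mono fun s hs => ?_)).trans_isLittleO h3
    rw [one_mul, norm_mul]
    exact hEb s hs
  have hfin := hA.add hE
  rw [add_zero, hΨt] at hfin
  refine hfin.congr_of_eventuallyEq (Eventually.of_forall fun s => ?_)
  simp [E]
end

section
/- Let ρ be a positive probability density on ℝ with inverse cdf G and Lorenz curve ℒ (so ℒ′ = G and ℒ″ = 1/(ρ∘G) on (0,1)). Let V : ℝ → ℝ and W : ℝ × ℝ → ℝ be continuous with ρ·V∘id, (x,y) ↦ W(x,y)ρ(x)ρ(y), and ρ log ρ all integrable. Then: (i) ∫_ℝ ρ(x) V(x) dx = ∫_0^1 V(ℒ′(f)) df; (ii) ∫_ℝ ∫_ℝ W(x,y) ρ(x) ρ(y) dx dy = ∫_0^1 ∫_0^1 W(ℒ′(f), ℒ′(g)) df dg; (iii) ∫_ℝ ρ(x) log ρ(x) dx = − ∫_0^1 log ℒ″(f) df. Consequently the classical free energy F[ρ] = ∫ ρ V + (1/2)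 ∬ W ρ ρ + ∫ ρ log ρ equals F̃[ℒ] = ∫_0^1 V(ℒ′) df + (1/2) ∫_0^1∫_0^1 W(ℒ′(f),ℒ′(g)) df dg − ∫_0^1 log ℒ″ df. -/
open MeasureTheory Set Filter

/- Here `G = ℒ′` is the inverse cdf and `fun f => 1 / ρ (G f) = ℒ″` the
second derivative of the Lorenz curve, per the paper's identities. -/
lemma key_change (ρ : ℝ → ℝ) (hρ : IsPosDensity ρ)
    (G : ℝ → ℝ) (hG : ∀ f ∈ Ioo (0:ℝ) 1, cdfOf ρ (G f) = f) (h : ℝ → ℝ) :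
    (∫ f in (0:ℝ)..1, h (G f)) = ∫ x, ρ x * h x := by
  obtain ⟨hc, hpos, hint, -⟩ := hρ
  have hi : Integrable ρ := by
    by_contra hn
    rw [integral_undef hn] at hint
    norm_num at hint
  have hd : ∀ x, HasDerivAt (cdfOf ρ) (ρ x) x := by
    intro x
    have h1 : HasDerivAt (fun u => cdfOf ρ 0 + ∫ t in (0:ℝ)..u, ρ t) (ρ x) x :=
      (intervalIntegral.integral_hasDerivAt_right (hc.intervalIntegrable _ _)
        (hc.stronglyMeasurableAtFilter _ _) hc.continuousAt).const_add _
    have h2 : cdfOf ρ = fun u => cdfOf ρ 0 + ∫ t in (0:ℝ)..u, ρ t := by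
      funext u
      have := intervalIntegral.integral_Iic_sub_Iic (μ := volume)
        (hi.integrableOn (s := Iic 0)) (hi.integrableOn (s := Iic u))
      simp only [cdfOf]
      linarith
    rw [h2]
    exact h1
  have hm : StrictMono (cdfOf ρ) := strictMono_of_hasDerivAt_pos hd hpos
  have h0 : ∀ x, 0 ≤ cdfOf ρ x := fun x => integral_nonneg fun y => (hpos y).le
  have h1 : ∀ x, cdfOf ρ x ≤ 1 := fun x => by
    rw [← hint]
    exact setIntegral_le_integral hi (Eventually.of_forall fun y => (hpos y).le)
  have hmem : ∀ x, cdfOf ρ x ∈ Ioo (0:ℝ) 1 := fun x =>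
    ⟨(h0 (x - 1)).trans_lt (hm (by linarith)), (hm (by linarith)).trans_le (h1 (x + 1))⟩
  have himg : cdfOf ρ '' univ = Ioo (0:ℝ) 1 := by
    ext f
    constructor
    · rintro ⟨x, -, rfl⟩
      exact hmem x
    · intro hf
      exact ⟨G f, trivial, hG f hf⟩
  have hGc : ∀ x, G (cdfOf ρ x) = x := fun x => hm.injective (hG _ (hmem x))
  have := integral_image_eq_integral_abs_deriv_smul (f := cdfOf ρ) (f' := ρ)
    MeasurableSet.univ (fun x _ => (hd x).hasDerivWithinAt) hm.injective.injOn (fun f => h (G f))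
  rw [himg] at this
  rw [intervalIntegral.integral_of_le zero_le_one, integral_Ioc_eq_integral_Ioo, this]
  simp [hGc, abs_of_pos (hpos _)]

theorem stmt7 (ρ : ℝ → ℝ) (hρ : IsPosDensity ρ)
    (G : ℝ → ℝ) (hG : ∀ f ∈ Ioo (0:ℝ) 1, cdfOf ρ (G f) = f)
    (V : ℝ → ℝ) (hV : Continuous V)
    (W : ℝ → ℝ → ℝ) (hW : Continuous (fun p : ℝ × ℝ => W p.1 p.2))
    (hVi : MeasureTheory.Integrable (fun x => ρ x * V x))
    (hWi : MeasureTheory.Integrable (fun p : ℝ × ℝ => W p.1 p.2 * ρ p.1 * ρ p.2))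
    (hSi : MeasureTheory.Integrable (fun x => ρ x * Real.log (ρ x))) :
    (∫ x, ρ x * V x) = (∫ f in (0:ℝ)..1, V (G f)) ∧
    (∫ x, ∫ y, W x y * ρ x * ρ y)
      = (∫ f in (0:ℝ)..1, ∫ g in (0:ℝ)..1, W (G f) (G g)) ∧
    (∫ x, ρ x * Real.log (ρ x)) = -(∫ f in (0:ℝ)..1, Real.log (1 / ρ (G f))) ∧
    (∫ x, ρ x * V x) + (1/2) * (∫ x, ∫ y, W x y * ρ x * ρ y)
        + (∫ x, ρ x * Real.log (ρ x))
      = (∫ f in (0:ℝ)..1, V (G f))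
        + (1/2) * (∫ f in (0:ℝ)..1, ∫ g in (0:ℝ)..1, W (G f) (G g))
        - (∫ f in (0:ℝ)..1, Real.log (1 / ρ (G f))) := by
  have A := key_change ρ hρ G hG V
  have B : (∫ x, ∫ y, W x y * ρ x * ρ y)
      = (∫ f in (0:ℝ)..1, ∫ g in (0:ℝ)..1, W (G f) (G g)) := by
    rw [key_change ρ hρ G hG (fun x => ∫ g in (0:ℝ)..1, W x (G g))]
    congr 1
    funext x
    rw [key_change ρ hρ G hG (fun y => W x y), ← integral_const_mul]
    congr 1
    funext y
    ring
  have C : (∫ x, ρ x * Real.log (ρ x)) = -(∫ f in (0:ℝ)..1, Real.log (1 / ρ (G f))) := by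
    rw [key_change ρ hρ G hG (fun x => Real.log (1 / ρ x)), ← integral_neg]
    congr 1
    funext x
    rw [one_div, Real.log_inv]
    ring
  refine ⟨A.symm, B, C, ?_⟩
  rw [A, B, C]
  ring
end
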